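/- Let k ≥ 1 and let n = (n_1, …, n_k) be a vector of positive integers with n_1 ≥ n_2 ≥ … ≥ n_k. If n_j is odd for all 2 ≤ j ≤ k (i.e., all coordinates except possibly the largest one are odd), then n is a lonely runner instance. -/

import Mathlib

/-!
If the largest speed `N` is odd too, take `t = 1/2`. Otherwise start from `t = 1/2`, where the odd
speeds are as far as possible from the integers, and perturb: at `t = 1/2 + 1/((k+1)N)` the runner
of even speed `N` is at distance exactly `1/(k+1)` from `ℤ`, while an odd speed, being at most `N`,
has moved by at most `1/(k+1)` from a half-integer. This suffices as soon as
`1/(k+1) ≤ 1/2 - 1/(k+1)`, i.e. `k ≥ 3`. The case `k = 1` is immediate.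

For `k = 2` (`exists_time_two`), let `m` be the other speed, `g = gcd(m, N + m)` and
`N + m = g c`, where `c = 2r + 1` is odd and at least `3`. By Bézout, some multiple `t` of
`1/(N + m)` has `t m ≡ r/c` and hence `t N ≡ -r/c` modulo `1`, with `1/3 ≤ r/c ≤ 1/2`.
-/

/-- The distance from a real number `x` to the nearest integer. -/
noncomputable def distNearestInt (x : ℝ) : ℝ := ⨅ m : ℤ, |x - m|

/-- A vector `n` of positive integers is a *lonely runner instance* if there is a
time `t` such that every `t·n j` has distance at least `1/(k+1)` to the nearest integer. -/
noncomputable def IsLonelyRunnerInstance (k : ℕ) (n : Fin k → ℤ) : Prop :=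
  ∃ t : ℝ, ∀ j : Fin k, (1 : ℝ) / (k + 1) ≤ distNearestInt (t * n j)

lemma le_distNearestInt {x d : ℝ} (z : ℤ) (h₁ : z + d ≤ x) (h₂ : x ≤ z + 1 - d) :
    d ≤ distNearestInt x := by
  refine le_ciInf fun m => ?_
  rcases le_or_gt m z with h | h
  · have h' : (m : ℝ) ≤ z := by exact_mod_cast h
    exact le_trans (by linarith) (le_abs_self _)
  · have h' : (z : ℝ) + 1 ≤ m := by exact_mod_cast h
    exact le_trans (by linarith) (neg_le_abs _)

/-- The case of two speeds of opposite parity. -/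
lemma exists_time_two (N m : ℤ) (hm : 0 < m) (hmN : m < N) (hsum : Odd (N + m)) :
    ∃ t : ℝ, 1 / 3 ≤ distNearestInt (t * N) ∧ 1 / 3 ≤ distNearestInt (t * m) := by
  obtain ⟨p, q, g, hg, hbez, hgm, c, hc⟩ :
      ∃ p q g : ℤ, 0 < g ∧ g = m * p + (N + m) * q ∧ g ∣ m ∧ g ∣ N + m :=
    ⟨_, _, (Int.gcd m (N + m) : ℤ), by
      exact_mod_cast Int.gcd_pos_of_ne_zero_left _ hm.ne',
      Int.gcd_eq_gcd_ab _ _, Int.gcd_dvd_left _ _, Int.gcd_dvd_right _ _⟩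
  have hgle : g ≤ m := Int.le_of_dvd hm hgm
  have hc2 : 2 < c := by
    by_contra! h
    nlinarith
  obtain ⟨r, hr⟩ : Odd c := by
    rw [hc] at hsum
    exact (Int.odd_mul.mp hsum).2
  have hr1 : (1 : ℝ) ≤ r := by
    have : 1 ≤ r := by omega
    exact_mod_cast this
  have hg' : (g : ℝ) ≠ 0 := by exact_mod_cast hg.ne'
  have hcR : (c : ℝ) = 2 * r + 1 := by exact_mod_cast hr
  have hc0 : (0 : ℝ) < c := by rw [hcR]; linarith
  have hbezR : (g : ℝ) = m * p + (N + m) * q := by exact_mod_cast hbez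
  have hsumR : (N : ℝ) + m = g * c := by exact_mod_cast hc
  have hlo : (1 : ℝ) / 3 ≤ r / c := by
    rw [div_le_div_iff₀ (by norm_num) hc0]; linarith
  have hhi : (r : ℝ) / c ≤ 1 / 2 := by
    rw [div_le_div_iff₀ hc0 (by norm_num)]; linarith
  have htm : (r * p / (g * c) : ℝ) * m = r / c - r * q := by
    rw [hsumR] at hbezR
    field_simp
    linear_combination -hbezR
  have htN : (r * p / (g * c) : ℝ) * N = r * p - (r / c - r * q) := by
    rw [← htm, eq_sub_iff_add_eq, ← mul_add, hsumR]
    field_simp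
  refine ⟨r * p / (g * c), ?_, ?_⟩
  · rw [htN]
    apply le_distNearestInt (r * p + r * q - 1) <;> push_cast <;> linarith
  · rw [htm]
    apply le_distNearestInt (-(r * q)) <;> push_cast <;> linarith

/-- Corollary 6: if all speeds except possibly the largest one are odd,
then `n` is a lonely runner instance. -/
theorem lonely_runner_of_all_but_largest_odd (k : ℕ) (hk : 1 ≤ k)
    (n : Fin k → ℤ) (hn : ∀ j, 0 < n j)
    (hmono : ∀ i j : Fin k, i ≤ j → n j ≤ n i)
    (hodd : ∀ j : Fin k, 0 < (j : ℕ) → Odd (n j)) :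
    IsLonelyRunnerInstance k n := by
  have hkR : (1 : ℝ) ≤ k := by exact_mod_cast hk
  have hhalf : (1 : ℝ) / (k + 1) ≤ 1 / 2 :=
    one_div_le_one_div_of_le (by norm_num) (by linarith)
  have key : ∀ N : ℤ, N = n ⟨0, hk⟩ → IsLonelyRunnerInstance k n := by
    intro N hN
    have hNpos : 0 < N := hN ▸ hn _
    have hNR : (0 : ℝ) < N := by exact_mod_cast hNpos
    have hle : ∀ j, n j ≤ N := fun j => hN ▸ hmono _ _ (Nat.zero_le _)
    have hcases : ∀ j, n j = N ∨ Odd (n j) := by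
      intro j
      rcases Nat.eq_zero_or_pos (j : ℕ) with h | h
      · left
        rw [hN]
        congr 1
        exact Fin.ext h
      · exact Or.inr (hodd j h)
    rcases Int.even_or_odd N with hev | hNodd
    · obtain ⟨b, hb⟩ := hev
      have hbR : (N : ℝ) = b + b := by exact_mod_cast hb
      obtain rfl | rfl | h3 : k = 1 ∨ k = 2 ∨ 3 ≤ k := by omega
      · refine ⟨1 / (2 * N), fun j => ?_⟩
        have hj : n j = N := by
          rw [hN]
          congr 1
          exact Subsingleton.elim _ _
        rw [hj]
        have : 1 / (2 * (N : ℝ)) * N = 1 / 2 := by field_simp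
        rw [this]
        apply le_distNearestInt 0 <;> push_cast <;> linarith
      · have h1 : Odd (n 1) := hodd 1 (by norm_num)
        have hlt : n 1 < N := by
          refine lt_of_le_of_ne (hle 1) fun h => ?_
          obtain ⟨a, ha⟩ := h1
          omega
        obtain ⟨t, ht0, ht1⟩ := exists_time_two N (n 1) (hn 1) hlt
          (Even.add_odd ⟨b, hb⟩ h1)
        have h13 : (1 : ℝ) / ((2 : ℕ) + 1) = 1 / 3 := by norm_num
        refine ⟨t, fun j => ?_⟩
        rw [h13]
        fin_cases j
        · rw [hN] at ht0
          exact ht0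
        · exact ht1
      · have h3R : (3 : ℝ) ≤ k := by exact_mod_cast h3
        have hq : (1 : ℝ) / (k + 1) ≤ 1 / 4 :=
          one_div_le_one_div_of_le (by norm_num) (by linarith)
        set d : ℝ := 1 / (k + 1) with hd
        have hd0 : 0 < d := by positivity
        refine ⟨1 / 2 + d / N, fun j => ?_⟩
        rcases hcases j with h | ⟨a, ha⟩
        · have : (1 / 2 + d / N) * (N : ℝ) = b + d := by
            rw [add_mul, div_mul_cancel₀ _ hNR.ne', hbR]
            ring
          rw [h, this]
          apply le_distNearestInt b <;> linarith
        · have haR : (n j : ℝ) = 2 * a + 1 := by exact_mod_cast ha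
          have hjpos : (0 : ℝ) < n j := by exact_mod_cast hn j
          have hjle : (n j : ℝ) ≤ N := by exact_mod_cast hle j
          have hs0 : 0 ≤ d / N * n j := by positivity
          have hs1 : d / N * n j ≤ d := by
            rw [div_mul_eq_mul_div, div_le_iff₀ hNR]
            gcongr
          rw [add_mul]
          apply le_distNearestInt a <;> linarith
    · refine ⟨1 / 2, fun j => ?_⟩
      obtain ⟨a, ha⟩ : Odd (n j) := (hcases j).elim (fun h => h ▸ hNodd) id
      have haR : (n j : ℝ) = 2 * a + 1 := by exact_mod_cast ha
      rw [haR]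
      apply le_distNearestInt a <;> linarith
  exact key _ rfl
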